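/- For every permutation w of {1,…,n}, the coefficient of B^{n²−ℓ(w)} in the generic pipe dream polynomial G_w, viewed as a polynomial in B with coefficients in ℤ[x₁,…,xₙ,y₁,…,yₙ,A], equals the sum over all classic pipe dreams δ ∈ GPDs(w) of the product over all cross tiles at positions (i,j) of δ of (A + x_i − y_j); moreover this sum equals the double Schubert polynomial S_w evaluated at (A+x₁,…,A+xₙ; y₁,…,yₙ). -/

import Mathlib

open scoped Classical

namespace GPDpaper

/-- Raw data of a pipe-filling of the `n × n` grid: `d.1 i j` is the (optional) pipe label on
the vertical edge at row `i`, West of column `j` (so `d.1 i 0` is on the West boundary and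
`d.1 i (Fin.last n)` on the East boundary); `d.2 i j` is the label on the horizontal edge
North of row `i` in column `j` (so `d.2 0 j` is on the North boundary and
`d.2 (Fin.last n) j` on the South boundary).  Rows are numbered from the top. -/
abbrev Pipes (n : ℕ) :=
  (Fin n → Fin (n+1) → Option (Fin n)) × (Fin (n+1) → Fin n → Option (Fin n))

variable {n : ℕ}

/-- Label on the West edge of square `(i,j)`. -/
def We (d : Pipes n) (i j : Fin n) : Option (Fin n) := d.1 i j.castSucc
/-- Label on the East edge of square `(i,j)`. -/
def Ea (d : Pipes n) (i j : Fin n) : Option (Fin n) := d.1 i j.succ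
/-- Label on the North edge of square `(i,j)`. -/
def No (d : Pipes n) (i j : Fin n) : Option (Fin n) := d.2 i.castSucc j
/-- Label on the South edge of square `(i,j)`. -/
def So (d : Pipes n) (i j : Fin n) : Option (Fin n) := d.2 i.succ j

/-- The local condition making `d` a generic pipe dream: at each square, the pair of labels
leaving through the East and North edges is either `(W,S)` (cross/horizontal/vertical/blank
tile) or `(S,W)` (bump/elbow/blank tile); moreover two edges of the same square never carry
the same pipe label. -/
def IsValid (d : Pipes n) : Prop :=
  ∀ i j : Fin n,
    ((Ea d i j, No d i j) = (We d i j, So d i j) ∨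
     (Ea d i j, No d i j) = (So d i j, We d i j)) ∧
    (We d i j = So d i j → We d i j = none)

/-- The seven generic pipe dream tiles. -/
inductive Tile where
  | cross | bump | nw | se | horiz | vert | blank
deriving DecidableEq

/-- The tile of a pipe-filling at square `(i,j)`. -/
def tile (d : Pipes n) (i j : Fin n) : Tile :=
  match We d i j, So d i j with
  | some a, some _ => if Ea d i j = some a then .cross else .bump
  | some _, none => if No d i j = none then .horiz else .nw
  | none, some _ => if No d i j = none then .se else .vert
  | none, none => .blank

/-- `d` is a generic pipe dream for the permutation `w`: it is locally valid, the pipe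
entering the West boundary in row `i` is labelled `i`, no pipes meet the East and South
boundaries, and the pipe exiting the North boundary in column `j` is labelled `w⁻¹(j)`. -/
def IsGPDof (w : Equiv.Perm (Fin n)) (d : Pipes n) : Prop :=
  IsValid d ∧
  (∀ i : Fin n, d.1 i 0 = some i) ∧
  (∀ i : Fin n, d.1 i (Fin.last n) = none) ∧
  (∀ j : Fin n, d.2 (Fin.last n) j = none) ∧
  (∀ j : Fin n, d.2 0 j = some (w.symm j))

/-- Number of tiles of `d` of a given type. -/
noncomputable def tileCount (d : Pipes n) (t : Tile) : ℕ :=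
  (Finset.univ.filter (fun p : Fin n × Fin n => tile d p.1 p.2 = t)).card

/-- The pipes labelled `p` and `q` cross at the tile `(i,j)`. -/
def CrossesAt (d : Pipes n) (p q : Fin n) (i j : Fin n) : Prop :=
  tile d i j = .cross ∧
  ((We d i j = some p ∧ So d i j = some q) ∨ (We d i j = some q ∧ So d i j = some p))

/-- The number of tiles at which the pipes labelled `p` and `q` cross. -/
noncomputable def crossCount (d : Pipes n) (p q : Fin n) : ℕ :=
  (Finset.univ.filter (fun ij : Fin n × Fin n => CrossesAt d p q ij.1 ij.2)).card

/-- No two pipes of `d` cross each other at more than one tile. -/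
def NoDoubleCross (d : Pipes n) : Prop := ∀ p q : Fin n, crossCount d p q ≤ 1

/-- Number of inversions (Coxeter length) of a permutation. -/
def invCount (w : Equiv.Perm (Fin n)) : ℕ :=
  (Finset.univ.filter (fun p : Fin n × Fin n => p.1 < p.2 ∧ w p.2 < w p.1)).card

/-- Classic pipe dream (in 1-indexed terms: crosses and bumps for `i+j ≤ n`, NW-elbows on the
antidiagonal `i+j = n+1`, blanks below, and no two pipes crossing twice). -/
def IsClassic (d : Pipes n) : Prop :=
  (∀ i j : Fin n, (i : ℕ) + (j : ℕ) + 2 ≤ n → tile d i j = .cross ∨ tile d i j = .bump) ∧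
  (∀ i j : Fin n, (i : ℕ) + (j : ℕ) + 2 = n + 1 → tile d i j = .nw) ∧
  (∀ i j : Fin n, (i : ℕ) + (j : ℕ) + 2 > n + 1 → tile d i j = .blank) ∧
  NoDoubleCross d

/-- Bumpless-reduced: no bump tiles and no two pipes crossing twice. -/
def IsBumplessReduced (d : Pipes n) : Prop :=
  (∀ i j : Fin n, tile d i j ≠ .bump) ∧ NoDoubleCross d


/-- Variables `x₁,…,xₙ, y₁,…,yₙ, A` (the coefficient ring for polynomials in `B`). -/
inductive XYA (n : ℕ) where
  | x (i : Fin n) | y (j : Fin n) | A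

/-- Variables `x₁,…,xₙ, y₁,…,yₙ` of double Schubert polynomials. -/
inductive XY (n : ℕ) where
  | x (i : Fin n) | y (j : Fin n)

/-- The weight of a generic pipe dream, viewed as a polynomial in the variable `B` with
coefficients in `ℤ[x₁,…,xₙ,y₁,…,yₙ,A]`. -/
noncomputable def wtB (d : Pipes n) : Polynomial (MvPolynomial (XYA n) ℤ) :=
  ∏ i : Fin n, ∏ j : Fin n,
    match tile d i j with
    | .cross | .horiz | .vert =>
        Polynomial.C (MvPolynomial.X XYA.A + MvPolynomial.X (XYA.x i) - MvPolynomial.X (XYA.y j))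
    | .blank =>
        Polynomial.X - Polynomial.C (MvPolynomial.X (XYA.x i) - MvPolynomial.X (XYA.y j))
    | _ => Polynomial.X + Polynomial.C (MvPolynomial.X XYA.A)

/-- The generic pipe dream polynomial `G_w`, as a polynomial in `B`. -/
noncomputable def GB (w : Equiv.Perm (Fin n)) : Polynomial (MvPolynomial (XYA n) ℤ) :=
  ∑ d ∈ Finset.univ.filter (fun d : Pipes n => IsGPDof w d), wtB d

/-- The adjacent transposition `sᵢ` exchanging `i` and `i+1` (0-indexed). -/
def adjSwap (i : Fin n) (hi : (i : ℕ) + 1 < n) : Equiv.Perm (Fin n) :=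
  Equiv.swap i ⟨(i : ℕ) + 1, hi⟩

/-!
A pipe goes straight through the cross, horizontal and vertical tiles and turns at all others, so a
generic pipe dream is determined by the set `D` of its straight tiles. Label the frontier of the
region swept so far, when the cells are visited row by row from the bottom and from left to right:
a straight tile at the cell `(i, j)` (0-indexed) multiplies this labelling by the transposition
`s_{i+j}`.

Straight tiles have weights of degree `0` in `B`, all others have monic weights of degree `1`. The
frontier labels show that the pipes `p < q` cross an odd number of times if `(p, q)` is an inversion
of `w` and an even number of times otherwise. Hence there are at least `ℓ(w)` straight tiles, with
equality exactly if all of them are crosses and no two pipes cross twice; such a filling has the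
shape of a classic pipe dream, because without horizontal and vertical tiles a cell has a pipe
through its East edge if and only if it has one through its South edge.

Classic pipe dreams are thus the reduced subwords for `w` of the word of the staircase
`i + j + 1 < n`, and their generating function is a coefficient of a product of factors
`1 + (x_i - y_j) u_{i+j}` over the nil-Coxeter algebra, as found by Fomin and Kirillov. By the
Yang–Baxter equation, exchanging `x_k` and `x_{k+1}` multiplies this product by
`1 + (x_{k+1} - x_k) u_k`, which is the divided difference recursion. The longest element has a
single reduced subword, and every other permutation is reached from it by removing one inversion at
a time, so the recursion has at most one solution.
-/

section NilCoxeter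

variable {R A : Type*} [CommRing R] [Ring A] [Algebra R A]

/-- The relations of the nil-Coxeter algebra of type `A`, for a family of ring elements indexed by
`ℕ`. -/
structure IsNilCoxeter (u : ℕ → A) : Prop where
  mul_self (k : ℕ) : u k * u k = 0
  commute {k l : ℕ} : k + 2 ≤ l → Commute (u k) (u l)
  braid (k : ℕ) : u k * u (k + 1) * u k = u (k + 1) * u k * u (k + 1)

/-- The factor `h_k(t) = 1 + t u_k` of Fomin and Kirillov. -/
def ybFactor (u : ℕ → A) (k : ℕ) (t : R) : A := 1 + t • u k

variable {u : ℕ → A}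

lemma IsNilCoxeter.ybFactor_commute (hu : IsNilCoxeter u) {k l : ℕ} (h : k + 2 ≤ l) (a b : R) :
    Commute (ybFactor u k a) (ybFactor u l b) :=
  (Commute.one_left _).add_left <|
    ((Commute.one_right _).add_right ((hu.commute h).smul_right b)).smul_left a

lemma IsNilCoxeter.ybFactor_mul_ybFactor (hu : IsNilCoxeter u) (k : ℕ) (a b : R) :
    ybFactor u k a * ybFactor u k b = ybFactor u k (a + b) := by
  simp only [ybFactor, mul_add, add_mul, one_mul, mul_one, smul_mul_assoc, mul_smul_comm,
    hu.mul_self, smul_zero, add_smul]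
  module

lemma IsNilCoxeter.yang_baxter (hu : IsNilCoxeter u) (k : ℕ) (a b : R) :
    ybFactor u k a * ybFactor u (k + 1) (a + b) * ybFactor u k b =
      ybFactor u (k + 1) b * ybFactor u k (a + b) * ybFactor u (k + 1) a := by
  simp only [ybFactor, mul_add, add_mul, one_mul, mul_one, smul_mul_assoc, mul_smul_comm,
    hu.mul_self, smul_zero, smul_add, hu.braid, smul_smul]
  module

/-- The cells `(i, 0), …, (i, m - 1)` of row `i`, from left to right. -/
def rowCells (i m : ℕ) : List (ℕ × ℕ) := (List.range m).map (i, ·)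

/-- The cells of the rows `i, …, i + m - 1`, where row `a` consists of its first `width a` cells.
The rows are listed from the bottom one up and each row from left to right, so that a pipe dream is
read in an order in which the pipes entering a cell are known before those leaving it. -/
def sweepCells (width : ℕ → ℕ) : ℕ → ℕ → List (ℕ × ℕ)
  | _, 0 => []
  | i, m + 1 => sweepCells width (i + 1) m ++ rowCells i (width i)

lemma mem_rowCells {i m : ℕ} {c : ℕ × ℕ} : c ∈ rowCells i m ↔ c.1 = i ∧ c.2 < m := by
  simp only [rowCells, List.mem_map, List.mem_range, Prod.ext_iff]
  grind

lemma rowCells_succ (i m : ℕ) : rowCells i (m + 1) = rowCells i m ++ [(i, m)] := by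
  simp [rowCells, List.range_succ]

lemma nodup_rowCells (i m : ℕ) : (rowCells i m).Nodup :=
  List.nodup_range.map (Prod.mk_right_injective i)

lemma mem_sweepCells {width : ℕ → ℕ} {m i : ℕ} {c : ℕ × ℕ} :
    c ∈ sweepCells width i m ↔ (i ≤ c.1 ∧ c.1 < i + m) ∧ c.2 < width c.1 := by
  induction m generalizing i with
  | zero => simp [sweepCells]
  | succ m ih =>
    simp only [sweepCells, List.mem_append, ih, mem_rowCells]
    grind

lemma nodup_sweepCells (width : ℕ → ℕ) (i m : ℕ) : (sweepCells width i m).Nodup := by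
  induction m generalizing i with
  | zero => exact List.nodup_nil
  | succ m ih =>
    refine (ih (i + 1)).append (nodup_rowCells i _) fun c hc hc' => ?_
    rw [mem_sweepCells] at hc
    rw [mem_rowCells] at hc'
    omega

/-- The product of the factors `h_{i+j}(t (i, j))` over a list of cells `(i, j)`, in the order of
the list. -/
def cellProd (u : ℕ → A) (t : ℕ × ℕ → R) (l : List (ℕ × ℕ)) : A :=
  (l.map fun c => ybFactor u (c.1 + c.2) (t c)).prod

lemma cellProd_cons (t : ℕ × ℕ → R) (c : ℕ × ℕ) (l : List (ℕ × ℕ)) :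
    cellProd u t (c :: l) = ybFactor u (c.1 + c.2) (t c) * cellProd u t l := by
  simp [cellProd]

lemma cellProd_append (t : ℕ × ℕ → R) (l l' : List (ℕ × ℕ)) :
    cellProd u t (l ++ l') = cellProd u t l * cellProd u t l' := by
  simp [cellProd]

lemma cellProd_congr {t t' : ℕ × ℕ → R} {l : List (ℕ × ℕ)} (h : ∀ c ∈ l, t c = t' c) :
    cellProd u t l = cellProd u t' l := by
  rw [cellProd, cellProd, List.map_congr_left fun c hc => by rw [h c hc]]

lemma IsNilCoxeter.ybFactor_commute_cellProd (hu : IsNilCoxeter u) {k : ℕ} {l : List (ℕ × ℕ)}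
    (h : ∀ c ∈ l, k + 2 ≤ c.1 + c.2 ∨ c.1 + c.2 + 2 ≤ k) (a : R) (t : ℕ × ℕ → R) :
    Commute (ybFactor u k a) (cellProd u t l) := by
  refine Commute.list_prod_right _ _ fun z hz => ?_
  obtain ⟨c, hc, rfl⟩ := List.mem_map.mp hz
  exact (h c hc).elim (fun h => hu.ybFactor_commute h _ _) fun h => (hu.ybFactor_commute h _ _).symm

/-- The product `h_k(x - y₀) h_{k+1}(x - y₁) ⋯ h_{k+m-1}(x - y_{m-1})` attached to row `k`. -/
def rowProd (u : ℕ → A) (y : ℕ → R) (k m : ℕ) (x : R) : A :=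
  cellProd u (fun c => x - y c.2) (rowCells k m)

lemma rowProd_succ (y : ℕ → R) (k m : ℕ) (x : R) :
    rowProd u y k (m + 1) x = rowProd u y k m x * ybFactor u (k + m) (x - y m) := by
  rw [rowProd, rowCells_succ, cellProd_append, rowProd, cellProd, cellProd]
  simp

lemma IsNilCoxeter.ybFactor_mul_rowProd_mul_rowProd (hu : IsNilCoxeter u) (y : ℕ → R) (k m : ℕ)
    (x x' : R) :
    ybFactor u k (x' - x) * rowProd u y (k + 1) m x' * rowProd u y k m x =
      rowProd u y (k + 1) m x * rowProd u y k m x' * ybFactor u (k + m) (x' - x) := by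
  induction m with
  | zero => simp [rowProd, cellProd, rowCells]
  | succ m ih =>
    have hcomm (a b : R) : Commute (ybFactor u (k + m + 1) a) (rowProd u y k m b) :=
      hu.ybFactor_commute_cellProd (fun c hc => by rw [mem_rowCells] at hc; omega) _ _
    have hyb := hu.yang_baxter (k + m) (x' - x) (x - y m)
    rw [sub_add_sub_cancel] at hyb
    rw [rowProd_succ, rowProd_succ, rowProd_succ, rowProd_succ, add_right_comm k 1 m, ← add_assoc]
    calc
      _ = ybFactor u k (x' - x) * rowProd u y (k + 1) m x' *
            (ybFactor u (k + m + 1) (x' - y m) * rowProd u y k m x) *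
            ybFactor u (k + m) (x - y m) := by
        simp only [mul_assoc]
      _ = (ybFactor u k (x' - x) * rowProd u y (k + 1) m x' * rowProd u y k m x) *
            ybFactor u (k + m + 1) (x' - y m) * ybFactor u (k + m) (x - y m) := by
        rw [(hcomm _ _).eq]; simp only [mul_assoc]
      _ = rowProd u y (k + 1) m x * rowProd u y k m x' * (ybFactor u (k + m) (x' - x) *
            ybFactor u (k + m + 1) (x' - y m) * ybFactor u (k + m) (x - y m)) := by
        rw [ih]; simp only [mul_assoc]
      _ = rowProd u y (k + 1) m x * (rowProd u y k m x' * ybFactor u (k + m + 1) (x - y m)) *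
            ybFactor u (k + m) (x' - y m) * ybFactor u (k + m + 1) (x' - x) := by
        rw [hyb]; simp only [mul_assoc]
      _ = _ := by rw [← (hcomm _ _).eq]; simp only [mul_assoc]

lemma IsNilCoxeter.ybFactor_mul_rowProd_mul_rowProd_succ (hu : IsNilCoxeter u) (y : ℕ → R)
    (k m : ℕ) (x x' : R) :
    ybFactor u k (x' - x) * rowProd u y (k + 1) m x' * rowProd u y k (m + 1) x =
      rowProd u y (k + 1) m x * rowProd u y k (m + 1) x' := by
  rw [rowProd_succ, ← mul_assoc, hu.ybFactor_mul_rowProd_mul_rowProd, mul_assoc,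
    hu.ybFactor_mul_ybFactor, sub_add_sub_cancel, rowProd_succ, mul_assoc]

/-- The adjacent transposition of `ℕ` exchanging `k` and `k + 1`. -/
def natSwap (k : ℕ) : Equiv.Perm ℕ := Equiv.swap k (k + 1)

lemma natSwap_apply (k a : ℕ) :
    natSwap k a = if a = k then k + 1 else if a = k + 1 then k else a :=
  Equiv.swap_apply_def _ _ _

lemma natSwap_apply_left (k : ℕ) : natSwap k k = k + 1 := Equiv.swap_apply_left _ _

lemma natSwap_apply_right (k : ℕ) : natSwap k (k + 1) = k := Equiv.swap_apply_right _ _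

lemma natSwap_apply_of_ne {k a : ℕ} (h : a ≠ k) (h' : a ≠ k + 1) : natSwap k a = a :=
  Equiv.swap_apply_of_ne_of_ne h h'

lemma natSwap_mul_self (k : ℕ) : natSwap k * natSwap k = 1 := Equiv.swap_mul_self _ _

lemma natSwap_inv (k : ℕ) : (natSwap k)⁻¹ = natSwap k := Equiv.swap_inv _ _

theorem IsNilCoxeter.cellProd_sweepCells_natSwap (hu : IsNilCoxeter u) (x y : ℕ → R)
    {width : ℕ → ℕ} {k : ℕ} (hk : width k = width (k + 1) + 1) {i m : ℕ} (hik : i ≤ k)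
    (hkm : k + 1 < i + m) :
    cellProd u (fun c => x (natSwap k c.1) - y c.2) (sweepCells width i m) =
      ybFactor u k (x (k + 1) - x k) *
        cellProd u (fun c => x c.1 - y c.2) (sweepCells width i m) := by
  have hrow (x : ℕ → R) (a b : ℕ) :
      cellProd u (fun c => x c.1 - y c.2) (rowCells a b) = rowProd u y a b (x a) :=
    cellProd_congr fun c hc => by rw [(mem_rowCells.mp hc).1]
  induction m generalizing i with
  | zero => omega
  | succ m ih =>
    rcases hik.lt_or_eq with hik | rfl
    · rw [sweepCells, cellProd_append, cellProd_append, ih hik (by omega), mul_assoc,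
        hrow fun a => x (natSwap k a), hrow x, natSwap_apply_of_ne (by omega) (by omega)]
    · obtain ⟨m, rfl⟩ : ∃ m', m = m' + 1 := ⟨m - 1, by omega⟩
      have hbelow : cellProd u (fun c => x (natSwap i c.1) - y c.2) (sweepCells width (i + 2) m) =
          cellProd u (fun c => x c.1 - y c.2) (sweepCells width (i + 2) m) :=
        cellProd_congr fun c hc => by
          rw [mem_sweepCells] at hc
          rw [natSwap_apply_of_ne (by omega) (by omega)]
      have hcomm : Commute (ybFactor u i (x (i + 1) - x i))
          (cellProd u (fun c => x c.1 - y c.2) (sweepCells width (i + 2) m)) :=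
        hu.ybFactor_commute_cellProd (fun c hc => by rw [mem_sweepCells] at hc; omega) _ _
      simp only [sweepCells, cellProd_append, hbelow, hrow fun a => x (natSwap i a), hrow x,
        natSwap_apply_left, natSwap_apply_right]
      rw [hk, mul_assoc, ← hu.ybFactor_mul_rowProd_mul_rowProd_succ, ← mul_assoc, ← mul_assoc,
        ← hcomm.eq]
      simp only [mul_assoc]

end NilCoxeter

section ReducedSubwords

variable {R : Type*} [CommRing R]

/-- The descent operators, which represent the nil-Coxeter relations on functions of permutations:
`(u_k F) v` is `F (v s_k)` if `v` has a descent at `k`, and `0` otherwise. -/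
def descentOp (k : ℕ) : Module.End R (Equiv.Perm ℕ → R) where
  toFun F v := if v (k + 1) < v k then F (v * natSwap k) else 0
  map_add' F G := by ext v; simp only [Pi.add_apply, ite_add_ite, add_zero]
  map_smul' r F := by ext v; simp only [Pi.smul_apply, smul_ite, smul_zero, RingHom.id_apply]

lemma descentOp_apply (k : ℕ) (F : Equiv.Perm ℕ → R) (v : Equiv.Perm ℕ) :
    descentOp k F v = if v (k + 1) < v k then F (v * natSwap k) else 0 := rfl

lemma isNilCoxeter_descentOp :
    IsNilCoxeter (descentOp : ℕ → Module.End R (Equiv.Perm ℕ → R)) where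
  mul_self k := by
    ext F v
    simp only [Module.End.mul_apply, descentOp_apply, Equiv.Perm.mul_apply, natSwap_apply_left,
      natSwap_apply_right, LinearMap.zero_apply, Pi.zero_apply]
    grind
  commute {k l} h := by
    refine LinearMap.ext fun F => funext fun v => ?_
    have hswap : v * natSwap k * natSwap l = v * natSwap l * natSwap k := by
      ext a
      simp only [Equiv.Perm.mul_apply, natSwap_apply]
      grind
    simp only [Module.End.mul_apply, descentOp_apply, Equiv.Perm.mul_apply, hswap]
    simp only [natSwap_apply]
    grind
  braid k := by
    ext F v
    have hswap : v * natSwap k * natSwap (k + 1) * natSwap k =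
        v * natSwap (k + 1) * natSwap k * natSwap (k + 1) := by
      ext a
      simp only [Equiv.Perm.mul_apply, natSwap_apply]
      grind
    simp only [Module.End.mul_apply, descentOp_apply, Equiv.Perm.mul_apply, hswap]
    simp only [natSwap_apply]
    grind

/-- The number of inversions of a permutation of `ℕ` among positions less than `n`. -/
noncomputable def natInvCount (n : ℕ) (v : Equiv.Perm ℕ) : ℕ :=
  (Finset.univ.filter fun p : Fin n × Fin n => p.1 < p.2 ∧ v p.2 < v p.1).card

lemma natInvCount_one (n : ℕ) : natInvCount n 1 = 0 := by
  simp only [natInvCount, Finset.card_eq_zero, Finset.filter_eq_empty_iff]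
  exact fun p _ h => lt_asymm h.1 h.2

lemma coe_adjSwap (i : Fin n) (hi : (i : ℕ) + 1 < n) (a : Fin n) :
    (adjSwap i hi a : ℕ) = natSwap i a := by
  rw [adjSwap, Equiv.swap_apply_def, natSwap_apply]
  simp only [Fin.ext_iff]
  split_ifs <;> rfl

lemma natInvCount_mul_natSwap_of_descent {k : ℕ} (hk : k + 1 < n) {v : Equiv.Perm ℕ}
    (h : v (k + 1) < v k) : natInvCount n (v * natSwap k) + 1 = natInvCount n v := by
  let i : Fin n := ⟨k, by omega⟩
  have hmem : (i, ⟨k + 1, hk⟩) ∈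
      Finset.univ.filter fun p : Fin n × Fin n => p.1 < p.2 ∧ v p.2 < v p.1 := by
    simpa [i] using h
  rw [natInvCount, natInvCount, ← Finset.card_erase_add_one hmem, add_left_inj]
  refine Finset.card_equiv ((adjSwap i hk).prodCongr (adjSwap i hk)) fun p => ?_
  simp only [Finset.mem_filter_univ, Finset.mem_erase, ne_eq, Prod.ext_iff, Fin.ext_iff,
    Fin.lt_def, Equiv.prodCongr_apply, Prod.map_fst, Prod.map_snd, coe_adjSwap,
    Equiv.Perm.mul_apply, natSwap_apply, i]
  grind

lemma natInvCount_mul_natSwap_of_not_descent {k : ℕ} (hk : k + 1 < n) {v : Equiv.Perm ℕ}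
    (h : ¬ v (k + 1) < v k) : natInvCount n (v * natSwap k) = natInvCount n v + 1 := by
  have hne : v k ≠ v (k + 1) := v.injective.ne (by omega)
  have hdesc : (v * natSwap k) (k + 1) < (v * natSwap k) k := by
    rw [Equiv.Perm.mul_apply, Equiv.Perm.mul_apply, natSwap_apply_left, natSwap_apply_right]
    omega
  rw [← natInvCount_mul_natSwap_of_descent hk hdesc, mul_assoc, natSwap_mul_self, mul_one]

/-- The product of the transpositions `s_{i+j}` over the cells `(i, j)` of the list `l` that belong
to `D`, in the order of `l`. -/
noncomputable def subwordProd (D : Finset (ℕ × ℕ)) (l : List (ℕ × ℕ)) : Equiv.Perm ℕ :=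
  (l.map fun c => if c ∈ D then natSwap (c.1 + c.2) else 1).prod

lemma subwordProd_nil (D : Finset (ℕ × ℕ)) : subwordProd D [] = 1 := rfl

lemma subwordProd_cons (D : Finset (ℕ × ℕ)) (c : ℕ × ℕ) (l : List (ℕ × ℕ)) :
    subwordProd D (c :: l) = (if c ∈ D then natSwap (c.1 + c.2) else 1) * subwordProd D l := by
  simp [subwordProd]

lemma subwordProd_append (D : Finset (ℕ × ℕ)) (l l' : List (ℕ × ℕ)) :
    subwordProd D (l ++ l') = subwordProd D l * subwordProd D l' := by
  simp [subwordProd]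

lemma subwordProd_congr {D D' : Finset (ℕ × ℕ)} {l : List (ℕ × ℕ)}
    (h : ∀ c ∈ l, c ∈ D ↔ c ∈ D') : subwordProd D l = subwordProd D' l := by
  rw [subwordProd, subwordProd, List.map_congr_left fun c hc => if_congr (h c hc) rfl rfl]

lemma natInvCount_subwordProd_inv_le (D : Finset (ℕ × ℕ)) {l : List (ℕ × ℕ)} (hl : l.Nodup)
    (hln : ∀ c ∈ l, c.1 + c.2 + 1 < n) :
    natInvCount n (subwordProd D l)⁻¹ ≤ (D ∩ l.toFinset).card := by
  induction l with
  | nil => simp [subwordProd_nil, natInvCount_one]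
  | cons c l ih =>
    obtain ⟨hcl, hl⟩ := List.nodup_cons.mp hl
    obtain ⟨hc, hln⟩ := List.forall_mem_cons.mp hln
    rw [subwordProd_cons, mul_inv_rev, List.toFinset_cons]
    by_cases hcD : c ∈ D
    · rw [if_pos hcD, natSwap_inv, Finset.inter_insert_of_mem hcD,
        Finset.card_insert_of_notMem (by simp [hcl])]
      by_cases hdesc : (subwordProd D l)⁻¹ (c.1 + c.2 + 1) < (subwordProd D l)⁻¹ (c.1 + c.2)
      · have := natInvCount_mul_natSwap_of_descent hc hdesc
        have := ih hl hln
        omega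
      · rw [natInvCount_mul_natSwap_of_not_descent hc hdesc]
        exact Nat.succ_le_succ (ih hl hln)
    · rw [if_neg hcD, inv_one, mul_one, Finset.inter_insert_of_notMem hcD]
      exact ih hl hln

/-- The cells of `D`, read in the order of `l`, spell a word for `v⁻¹` of minimal length. -/
def IsReducedSubword (n : ℕ) (l : List (ℕ × ℕ)) (v : Equiv.Perm ℕ) (D : Finset (ℕ × ℕ)) : Prop :=
  (subwordProd D l)⁻¹ = v ∧ D.card = natInvCount n v

lemma isReducedSubword_cons_of_notMem {D : Finset (ℕ × ℕ)} {c : ℕ × ℕ} (hcD : c ∉ D)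
    (l : List (ℕ × ℕ)) (v : Equiv.Perm ℕ) :
    IsReducedSubword n (c :: l) v D ↔ IsReducedSubword n l v D := by
  rw [IsReducedSubword, subwordProd_cons, if_neg hcD, one_mul, IsReducedSubword]

lemma isReducedSubword_cons_insert {D : Finset (ℕ × ℕ)} {c : ℕ × ℕ} {l : List (ℕ × ℕ)}
    (hcl : c ∉ l) (hl : l.Nodup) (hDl : D ⊆ l.toFinset) (hc : c.1 + c.2 + 1 < n)
    (hln : ∀ c ∈ l, c.1 + c.2 + 1 < n) (v : Equiv.Perm ℕ) :
    IsReducedSubword n (c :: l) v (insert c D) ↔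
      v (c.1 + c.2 + 1) < v (c.1 + c.2) ∧
        IsReducedSubword n l (v * natSwap (c.1 + c.2)) D := by
  have hcD : c ∉ D := fun h => hcl (List.mem_toFinset.mp (hDl h))
  have hprod : subwordProd (insert c D) l = subwordProd D l :=
    subwordProd_congr fun a ha =>
      Finset.mem_insert.trans (or_iff_right (by rintro rfl; exact hcl ha))
  have hmove (p : Equiv.Perm ℕ) :
      p * natSwap (c.1 + c.2) = v ↔ p = v * natSwap (c.1 + c.2) := by
    rw [← eq_mul_inv_iff_mul_eq, natSwap_inv]
  rw [IsReducedSubword, subwordProd_cons, if_pos (Finset.mem_insert_self _ _), hprod, mul_inv_rev,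
    natSwap_inv, hmove, Finset.card_insert_of_notMem hcD, IsReducedSubword]
  by_cases hdesc : v (c.1 + c.2 + 1) < v (c.1 + c.2)
  · simp only [hdesc, true_and, ← natInvCount_mul_natSwap_of_descent hc hdesc, add_left_inj]
  · refine iff_of_false (fun ⟨hp, hcard⟩ => ?_) fun h => hdesc h.1
    have hle := natInvCount_subwordProd_inv_le D hl hln
    rw [hp, natInvCount_mul_natSwap_of_not_descent hc hdesc, Finset.inter_eq_left.mpr hDl,
      ← hcard] at hle
    omega

theorem cellProd_descentOp_apply (t : ℕ × ℕ → R) {l : List (ℕ × ℕ)} (hl : l.Nodup)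
    (hln : ∀ c ∈ l, c.1 + c.2 + 1 < n) (v : Equiv.Perm ℕ) :
    cellProd descentOp t l (Pi.single 1 1) v =
      ∑ D ∈ l.toFinset.powerset with IsReducedSubword n l v D, ∏ c ∈ D, t c := by
  simp only [Finset.sum_filter]
  induction l generalizing v with
  | nil =>
    by_cases hv : v = 1
    · simp [cellProd, IsReducedSubword, subwordProd_nil, hv, natInvCount_one]
    · simp [cellProd, IsReducedSubword, subwordProd_nil, hv, Ne.symm hv]
  | cons c l ih =>
    obtain ⟨hcl, hl⟩ := List.nodup_cons.mp hl
    obtain ⟨hc, hln⟩ := List.forall_mem_cons.mp hln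
    have hcl' : c ∉ l.toFinset := mt List.mem_toFinset.mp hcl
    rw [cellProd_cons, List.toFinset_cons, Finset.sum_powerset_insert hcl']
    simp only [ybFactor, Module.End.mul_apply, LinearMap.add_apply, Module.End.one_apply,
      LinearMap.smul_apply, Pi.add_apply, Pi.smul_apply, descentOp_apply, ih hl hln]
    congr 1
    · refine Finset.sum_congr rfl fun D hD => ?_
      rw [isReducedSubword_cons_of_notMem fun h => hcl' (Finset.mem_powerset.mp hD h)]
    · have hterm (D : Finset (ℕ × ℕ)) (hD : D ∈ l.toFinset.powerset) :
          (if IsReducedSubword n (c :: l) v (insert c D) then ∏ a ∈ insert c D, t a else 0) =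
            if v (c.1 + c.2 + 1) < v (c.1 + c.2) ∧
              IsReducedSubword n l (v * natSwap (c.1 + c.2)) D
            then t c * ∏ a ∈ D, t a else 0 := by
        rw [Finset.mem_powerset] at hD
        simp only [isReducedSubword_cons_insert hcl hl hD hc hln,
          Finset.prod_insert fun h => hcl' (hD h)]
      rw [Finset.sum_congr rfl hterm, smul_eq_mul]
      split_ifs with hdesc
      · simp only [hdesc, true_and, Finset.mul_sum, mul_ite, mul_zero]
      · simp only [hdesc, false_and, if_false, Finset.sum_const_zero, mul_zero]

lemma subwordProd_rowCells_of_le {D : Finset (ℕ × ℕ)} {i m m' : ℕ} (hm : m ≤ m')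
    (hD : ∀ c ∈ D, c.1 = i → c.2 < m) :
    subwordProd D (rowCells i m') = subwordProd D (rowCells i m) := by
  induction m', hm using Nat.le_induction with
  | base => rfl
  | succ k hk ih =>
    have hmem : (i, k) ∉ D := fun h => hk.not_gt (hD _ h rfl)
    rw [rowCells_succ, subwordProd_append, ih, subwordProd_cons, if_neg hmem, one_mul,
      subwordProd_nil, mul_one]

lemma subwordProd_sweepCells_of_le {D : Finset (ℕ × ℕ)} {width width' : ℕ → ℕ}
    (hw : ∀ a, width a ≤ width' a) (hD : ∀ c ∈ D, c.2 < width c.1) (i m : ℕ) :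
    subwordProd D (sweepCells width' i m) = subwordProd D (sweepCells width i m) := by
  induction m generalizing i with
  | zero => rfl
  | succ m ih =>
    rw [sweepCells, sweepCells, subwordProd_append, subwordProd_append, ih,
      subwordProd_rowCells_of_le (hw i) fun c hc hci => by rw [← hci]; exact hD c hc]

end ReducedSubwords

section SweepStates

/-- The labelling of the frontier of an `n × n` grid after the rows `i, …, n - 1` have been swept,
crossing exactly at the cells of `D`.  The frontier is numbered from its top left end, so that the
North edge of column `j` of row `i` has number `i + j`. -/
noncomputable def rowState (D : Finset (ℕ × ℕ)) (n i : ℕ) : Equiv.Perm ℕ :=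
  subwordProd D (sweepCells (fun _ => n) i (n - i))

/-- The labelling of the frontier when the rows below row `i` and the first `j` cells of row `i`
have been swept: the West and South edges of the cell `(i, j)` have numbers `i + j` and
`i + j + 1`. -/
noncomputable def cellState (D : Finset (ℕ × ℕ)) (n i j : ℕ) : Equiv.Perm ℕ :=
  rowState D n (i + 1) * subwordProd D (rowCells i j)

variable {D : Finset (ℕ × ℕ)} {i j a m : ℕ}

lemma subwordProd_rowCells_succ : subwordProd D (rowCells i (m + 1)) =
    subwordProd D (rowCells i m) * if (i, m) ∈ D then natSwap (i + m) else 1 := by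
  rw [rowCells_succ, subwordProd_append, subwordProd_cons, subwordProd_nil, mul_one]

lemma subwordProd_rowCells_apply_of_lt_or_lt (h : a < i ∨ i + m < a) :
    subwordProd D (rowCells i m) a = a := by
  induction m with
  | zero => rfl
  | succ m ih =>
    rw [subwordProd_rowCells_succ, Equiv.Perm.mul_apply]
    split_ifs
    · rw [natSwap_apply_of_ne (by omega) (by omega), ih (by omega)]
    · exact ih (by omega)

lemma subwordProd_rowCells_apply_eq {m' : ℕ} (hm : m ≤ m') (ha : a < i + m) :
    subwordProd D (rowCells i m') a = subwordProd D (rowCells i m) a := by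
  induction m', hm using Nat.le_induction with
  | base => rfl
  | succ k hk ih =>
    rw [subwordProd_rowCells_succ, Equiv.Perm.mul_apply]
    split_ifs
    · rw [natSwap_apply_of_ne (by omega) (by omega), ih]
    · exact ih

lemma subwordProd_sweepCells_apply_of_lt {width : ℕ → ℕ} (h : a < i) :
    subwordProd D (sweepCells width i m) a = a := by
  induction m generalizing i with
  | zero => rfl
  | succ m ih =>
    rw [sweepCells, subwordProd_append, Equiv.Perm.mul_apply,
      subwordProd_rowCells_apply_of_lt_or_lt (Or.inl h), ih (h.trans i.lt_succ_self)]

lemma rowState_self (D : Finset (ℕ × ℕ)) (n : ℕ) : rowState D n n = 1 := by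
  rw [rowState, Nat.sub_self, sweepCells, subwordProd_nil]

lemma rowState_eq_cellState (hi : i < n) : rowState D n i = cellState D n i n := by
  rw [cellState, rowState, rowState, ← subwordProd_append, ← sweepCells]
  congr 2
  omega

lemma cellState_zero : cellState D n i 0 = rowState D n (i + 1) := mul_one _

lemma cellState_succ : cellState D n i (j + 1) =
    cellState D n i j * if (i, j) ∈ D then natSwap (i + j) else 1 := by
  rw [cellState, subwordProd_rowCells_succ, ← mul_assoc, cellState]

lemma cellState_apply_west : cellState D n i 0 i = i := by
  rw [cellState_zero, rowState, subwordProd_sweepCells_apply_of_lt i.lt_succ_self]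

lemma cellState_apply_south : cellState D n i j (i + j + 1) = rowState D n (i + 1) (i + 1 + j) := by
  rw [cellState, Equiv.Perm.mul_apply, subwordProd_rowCells_apply_of_lt_or_lt (by omega),
    Nat.add_right_comm]

lemma rowState_apply_north (hi : i < n) (hj : j < n) :
    rowState D n i (i + j) = cellState D n i (j + 1) (i + j) := by
  rw [rowState_eq_cellState hi, cellState, cellState, Equiv.Perm.mul_apply, Equiv.Perm.mul_apply,
    subwordProd_rowCells_apply_eq hj (by omega)]

/-- Whether `p` and `q` occur in the wrong order in the sequence of values of `v`, modulo two. -/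
noncomputable def inversionParity (p q : ℕ) (v : Equiv.Perm ℕ) : ZMod 2 :=
  if v⁻¹ q < v⁻¹ p then 1 else 0

lemma inversionParity_mul_natSwap {p q : ℕ} (hpq : p ≠ q) (v : Equiv.Perm ℕ) (k : ℕ) :
    inversionParity p q (v * natSwap k) = inversionParity p q v +
      if (v k = p ∧ v (k + 1) = q) ∨ (v k = q ∧ v (k + 1) = p) then 1 else 0 := by
  have hne : v⁻¹ p ≠ v⁻¹ q := v⁻¹.injective.ne hpq
  have hinv (a b : ℕ) : v a = b ↔ a = v⁻¹ b := Equiv.Perm.eq_inv_iff_eq.symm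
  have htwo : (1 : ZMod 2) + 1 = 0 := rfl
  simp only [inversionParity, mul_inv_rev, natSwap_inv, Equiv.Perm.mul_apply, hinv, natSwap_apply]
  grind

/-- The labels `p` and `q` enter the cell `(i, j)` of `D`, so that their pipes cross there. -/
def CrossInCell (D : Finset (ℕ × ℕ)) (n p q i j : ℕ) : Prop :=
  (i, j) ∈ D ∧
    ((cellState D n i j (i + j) = p ∧ cellState D n i j (i + j + 1) = q) ∨
      (cellState D n i j (i + j) = q ∧ cellState D n i j (i + j + 1) = p))

lemma inversionParity_cellState {p q : ℕ} (hpq : p ≠ q) (n i m : ℕ) :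
    inversionParity p q (cellState D n i m) = inversionParity p q (rowState D n (i + 1)) +
      ∑ j ∈ Finset.range m, if CrossInCell D n p q i j then 1 else 0 := by
  induction m with
  | zero => rw [cellState_zero, Finset.sum_range_zero, add_zero]
  | succ m ih =>
    rw [Finset.sum_range_succ, ← add_assoc, ← ih, cellState_succ, CrossInCell]
    by_cases h : (i, m) ∈ D
    · simp only [h, if_true, true_and, inversionParity_mul_natSwap hpq]
    · simp only [h, if_false, false_and, mul_one, add_zero]

theorem inversionParity_rowState {p q : ℕ} (hpq : p < q) (hi : i ≤ n) :
    inversionParity p q (rowState D n i) = ∑ a ∈ Finset.Ico i n, ∑ j ∈ Finset.range n,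
      if CrossInCell D n p q a j then 1 else 0 := by
  induction hi using Nat.decreasingInduction with
  | self => simp [rowState_self, inversionParity, hpq.le]
  | of_succ i hi ih =>
    rw [Finset.sum_eq_sum_Ico_succ_bot hi, ← ih, rowState_eq_cellState hi,
      inversionParity_cellState hpq.ne, add_comm]

end SweepStates

section Routing

/-- The pipe label attached to a natural number, where the numbers from `n` on stand for the
absence of a pipe. -/
def toLabel (n k : ℕ) : Option (Fin n) := if h : k < n then some ⟨k, h⟩ else none

lemma toLabel_eq_some_iff {k : ℕ} {a : Fin n} : toLabel n k = some a ↔ k = a := by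
  unfold toLabel
  split_ifs with h
  · simp [Fin.ext_iff]
  · simp only [false_iff]
    omega

lemma toLabel_eq_none_iff {k : ℕ} : toLabel n k = none ↔ n ≤ k := by
  simp [toLabel]

lemma toLabel_val (a : Fin n) : toLabel n a = some a := toLabel_eq_some_iff.mpr rfl

lemma toLabel_eq_none_of_eq {k l : ℕ} (h : toLabel n k = toLabel n l) (hkl : k ≠ l) :
    toLabel n k = none := by
  by_contra hne
  obtain ⟨a, ha⟩ := Option.ne_none_iff_exists'.mp hne
  exact hkl ((toLabel_eq_some_iff.mp ha).trans (toLabel_eq_some_iff.mp (h ▸ ha)).symm)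

/-- Each pipe traverses the cells of `D` without turning, and turns at every other cell; as long as
labels are not compared, blank tiles may be counted either way. -/
def IsRoutedBy (D : Finset (ℕ × ℕ)) (d : Pipes n) : Prop :=
  ∀ i j : Fin n, (Ea d i j, No d i j) =
    if ((i : ℕ), (j : ℕ)) ∈ D then (We d i j, So d i j) else (So d i j, We d i j)

lemma IsRoutedBy.eq_of_boundary_eq {D : Finset (ℕ × ℕ)} {d d' : Pipes n} (hd : IsRoutedBy D d)
    (hd' : IsRoutedBy D d') (hwest : ∀ i, d.1 i 0 = d'.1 i 0)
    (hsouth : ∀ j, d.2 (Fin.last n) j = d'.2 (Fin.last n) j) : d = d' := by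
  have hcell {i j : Fin n} (hW : We d i j = We d' i j) (hS : So d i j = So d' i j) :
      (Ea d i j, No d i j) = (Ea d' i j, No d' i j) := by
    rw [hd, hd', hW, hS]
  have hrow {i : Fin n} (hS : ∀ j, So d i j = So d' i j) (j : Fin (n + 1)) :
      d.1 i j = d'.1 i j := by
    induction j using Fin.induction with
    | zero => exact hwest i
    | succ j ih => exact (Prod.ext_iff.mp (hcell ih (hS j))).1
  have hcol (i : Fin (n + 1)) : ∀ j, d.2 i j = d'.2 i j := by
    induction i using Fin.reverseInduction with
    | last => exact hsouth
    | cast i ih => exact fun j => (Prod.ext_iff.mp (hcell (hrow ih _) (ih j))).2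
  ext1
  · exact funext₂ fun i j => hrow (fun j => hcol i.succ j) j
  · exact funext₂ hcol

/-- The filling of the `n × n` grid with the standard labels along the West boundary, no pipes along
the South boundary, and in which pipes go straight through the cells of `D` and turn elsewhere. -/
noncomputable def pipesOf (n : ℕ) (D : Finset (ℕ × ℕ)) : Pipes n :=
  (fun i j => toLabel n (cellState D n i j (i + j)), fun i j => toLabel n (rowState D n i (i + j)))

section pipesOf

variable (D : Finset (ℕ × ℕ)) (i j : Fin n)

lemma we_pipesOf : We (pipesOf n D) i j = toLabel n (cellState D n i j (i + j)) := rfl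

lemma so_pipesOf : So (pipesOf n D) i j = toLabel n (cellState D n i j (i + j + 1)) := by
  rw [cellState_apply_south]
  rfl

lemma isRoutedBy_pipesOf : IsRoutedBy D (pipesOf n D) := fun i j => by
  have hE : Ea (pipesOf n D) i j = toLabel n (cellState D n i (j + 1) (i + j + 1)) := rfl
  have hN : No (pipesOf n D) i j = toLabel n (cellState D n i (j + 1) (i + j)) := by
    rw [← rowState_apply_north i.2 j.2]
    rfl
  rw [hE, hN, we_pipesOf, so_pipesOf, cellState_succ]
  split_ifs
  · rw [Equiv.Perm.mul_apply, Equiv.Perm.mul_apply, natSwap_apply_left, natSwap_apply_right]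
  · rfl

lemma west_pipesOf : (pipesOf n D).1 i 0 = some i := by
  change toLabel n (cellState D n i 0 i) = some i
  rw [cellState_apply_west, toLabel_val]

lemma south_pipesOf : (pipesOf n D).2 (Fin.last n) j = none := by
  change toLabel n (rowState D n n (n + j)) = none
  rw [rowState_self, toLabel_eq_none_iff]
  exact Nat.le_add_right n j

lemma north_pipesOf : (pipesOf n D).2 0 j = toLabel n (rowState D n 0 j) := by
  change toLabel n (rowState D n 0 (0 + j)) = _
  rw [zero_add]

lemma isValid_pipesOf : IsValid (pipesOf n D) := fun i j => by
  constructor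
  · rw [isRoutedBy_pipesOf D i j]
    split_ifs
    exacts [Or.inl rfl, Or.inr rfl]
  · rw [we_pipesOf, so_pipesOf]
    exact fun h =>
      toLabel_eq_none_of_eq h ((cellState D n i j).injective.ne (Nat.succ_ne_self _).symm)

end pipesOf

/-- The tiles which every pipe traverses without turning, and whose weight does not involve `B`. -/
def Tile.IsStraight (t : Tile) : Prop := t = .cross ∨ t = .horiz ∨ t = .vert

/-- The positions of the straight tiles. -/
noncomputable def straightTiles (d : Pipes n) : Finset (Fin n × Fin n) :=
  Finset.univ.filter fun p => (tile d p.1 p.2).IsStraight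

lemma mem_straightTiles {d : Pipes n} {p : Fin n × Fin n} :
    p ∈ straightTiles d ↔ (tile d p.1 p.2).IsStraight := Finset.mem_filter_univ p

/-- The set `straightTiles d`, viewed in `ℕ × ℕ`. -/
noncomputable def straightCells (d : Pipes n) : Finset (ℕ × ℕ) :=
  (straightTiles d).map (Fin.valEmbedding.prodMap Fin.valEmbedding)

lemma mem_straightCells {d : Pipes n} {i j : Fin n} :
    ((i : ℕ), (j : ℕ)) ∈ straightCells d ↔ (tile d i j).IsStraight := by
  simp [straightCells, mem_straightTiles, Fin.val_inj]

lemma IsValid.isStraight_iff {d : Pipes n} (hd : IsValid d) (i j : Fin n) :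
    (tile d i j).IsStraight ↔ Ea d i j = We d i j ∧ We d i j ≠ So d i j := by
  obtain ⟨hroute, hne⟩ := hd i j
  unfold Tile.IsStraight tile
  rcases hW : We d i j with _ | a <;> rcases hS : So d i j with _ | b <;>
    simp only [hW, hS, Prod.mk.injEq] at hroute hne ⊢ <;> (try split_ifs) <;> simp_all

lemma IsValid.isRoutedBy_straightCells {d : Pipes n} (hd : IsValid d) :
    IsRoutedBy (straightCells d) d := fun i j => by
  simp only [mem_straightCells, hd.isStraight_iff]
  have hroute := (hd i j).1
  simp only [Prod.mk.injEq] at hroute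
  split_ifs <;> grind

variable {w : Equiv.Perm (Fin n)} {d : Pipes n}

theorem IsGPDof.eq_pipesOf (hd : IsGPDof w d) : d = pipesOf n (straightCells d) :=
  hd.1.isRoutedBy_straightCells.eq_of_boundary_eq (isRoutedBy_pipesOf _)
    (fun i => (hd.2.1 i).trans (west_pipesOf _ i).symm)
    (fun j => (hd.2.2.2.1 j).trans (south_pipesOf _ j).symm)

lemma IsGPDof.rowState_apply (hd : IsGPDof w d) (j : Fin n) :
    rowState (straightCells d) n 0 j = w.symm j := by
  rw [← toLabel_eq_some_iff, ← north_pipesOf, ← hd.eq_pipesOf, hd.2.2.2.2]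

lemma IsGPDof.rowState_inv_apply (hd : IsGPDof w d) (p : Fin n) :
    (rowState (straightCells d) n 0)⁻¹ p = w p := by
  rw [Equiv.Perm.inv_eq_iff_eq, hd.rowState_apply, Equiv.symm_apply_apply]

lemma tile_eq_cross_iff (d : Pipes n) (i j : Fin n) : tile d i j = .cross ↔
    (tile d i j).IsStraight ∧ We d i j ≠ none ∧ So d i j ≠ none := by
  unfold Tile.IsStraight tile
  rcases We d i j with _ | a <;> rcases So d i j with _ | b <;> dsimp only <;>
    (try split_ifs) <;> simp

lemma IsGPDof.crossesAt_iff (hd : IsGPDof w d) (p q i j : Fin n) :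
    CrossesAt d p q i j ↔ CrossInCell (straightCells d) n p q i j := by
  have hW : We d i j = _ := (congrArg (We · i j) hd.eq_pipesOf).trans (we_pipesOf _ i j)
  have hS : So d i j = _ := (congrArg (So · i j) hd.eq_pipesOf).trans (so_pipesOf _ i j)
  rw [CrossesAt, tile_eq_cross_iff, ← mem_straightCells, CrossInCell, hW, hS]
  simp only [← toLabel_eq_some_iff]
  grind

theorem IsGPDof.crossCount_cast (hd : IsGPDof w d) {p q : Fin n} (hpq : p < q) :
    (crossCount d p q : ZMod 2) = if w q < w p then 1 else 0 := by
  have hparity := inversionParity_rowState (D := straightCells d) hpq (Nat.zero_le n)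
  simp only [inversionParity, hd.rowState_inv_apply, Fin.val_fin_lt] at hparity
  rw [hparity, ← Finset.range_eq_Ico, crossCount, Finset.card_filter, Nat.cast_sum,
    Finset.sum_range, Fintype.sum_prod_type]
  refine Finset.sum_congr rfl fun i _ => ?_
  rw [Finset.sum_range]
  refine Finset.sum_congr rfl fun j _ => ?_
  simp only [hd.crossesAt_iff, Nat.cast_ite, Nat.cast_one, Nat.cast_zero]

end Routing

section CrossingNumber

lemma crossCount_comm (d : Pipes n) (p q : Fin n) : crossCount d p q = crossCount d q p :=
  congrArg Finset.card (Finset.filter_congr fun _ _ => and_congr_right' or_comm)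

lemma IsValid.crossCount_self {d : Pipes n} (hd : IsValid d) (p : Fin n) :
    crossCount d p p = 0 := by
  rw [crossCount, Finset.card_eq_zero, Finset.filter_eq_empty_iff]
  rintro ⟨i, j⟩ - ⟨-, h⟩
  obtain ⟨hW, hS⟩ := or_self_iff.mp h
  exact Option.some_ne_none p (hW.symm.trans ((hd i j).2 (hW.trans hS.symm)))

lemma IsValid.noDoubleCross_iff {d : Pipes n} (hd : IsValid d) :
    NoDoubleCross d ↔ ∀ p q : Fin n, p < q → crossCount d p q ≤ 1 := by
  refine ⟨fun h p q _ => h p q, fun h p q => ?_⟩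
  rcases lt_trichotomy p q with hpq | rfl | hqp
  · exact h p q hpq
  · exact (hd.crossCount_self p).trans_le zero_le_one
  · exact (crossCount_comm d p q).trans_le (h q p hqp)

lemma IsValid.card_crossesAt {d : Pipes n} (hd : IsValid d) (i j : Fin n) :
    (Finset.univ.filter fun p : Fin n × Fin n => p.1 < p.2 ∧ CrossesAt d p.1 p.2 i j).card =
      if tile d i j = .cross then 1 else 0 := by
  split_ifs with h
  · obtain ⟨hstraight, hW, hS⟩ := (tile_eq_cross_iff d i j).mp h
    obtain ⟨a, ha⟩ := Option.ne_none_iff_exists'.mp hW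
    obtain ⟨b, hb⟩ := Option.ne_none_iff_exists'.mp hS
    have hab : a ≠ b := by
      simpa [ha, hb] using ((hd.isStraight_iff i j).mp hstraight).2
    refine Finset.card_eq_one.mpr ⟨(min a b, max a b), ?_⟩
    ext ⟨p, q⟩
    simp only [Finset.mem_filter_univ, Finset.mem_singleton, Prod.mk.injEq, CrossesAt, h, ha, hb,
      Option.some.injEq, true_and]
    grind
  · rw [Finset.card_eq_zero, Finset.filter_eq_empty_iff]
    exact fun p _ hp => h hp.2.1

lemma IsValid.tileCount_cross {d : Pipes n} (hd : IsValid d) :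
    tileCount d .cross =
      ∑ p ∈ Finset.univ.filter (fun p : Fin n × Fin n => p.1 < p.2), crossCount d p.1 p.2 := by
  simp only [tileCount, crossCount, Finset.card_filter _ Finset.univ]
  rw [Finset.sum_comm]
  refine Finset.sum_congr rfl fun c _ => ?_
  rw [← hd.card_crossesAt, ← Finset.filter_filter, Finset.card_filter]

lemma invCount_eq_sum (w : Equiv.Perm (Fin n)) :
    invCount w = ∑ p ∈ Finset.univ.filter (fun p : Fin n × Fin n => p.1 < p.2),
      if w p.2 < w p.1 then 1 else 0 := by
  rw [invCount, ← Finset.card_filter, Finset.filter_filter]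

variable {w : Equiv.Perm (Fin n)} {d : Pipes n}

lemma IsGPDof.indicator_le_crossCount (hd : IsGPDof w d) {p q : Fin n} (hpq : p < q) :
    (if w q < w p then 1 else 0) ≤ crossCount d p q ∧
      ((if w q < w p then 1 else 0) = crossCount d p q ↔ crossCount d p q ≤ 1) := by
  have hparity : crossCount d p q ≡ if w q < w p then 1 else 0 [MOD 2] := by
    rw [← ZMod.natCast_eq_natCast_iff, hd.crossCount_cast hpq]
    push_cast
    rfl
  unfold Nat.ModEq at hparity
  split_ifs at hparity ⊢ <;> omega

theorem IsGPDof.invCount_le_tileCount_cross (hd : IsGPDof w d) :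
    invCount w ≤ tileCount d .cross := by
  rw [hd.1.tileCount_cross, invCount_eq_sum]
  exact Finset.sum_le_sum fun p hp => (hd.indicator_le_crossCount (by simpa using hp)).1

theorem IsGPDof.tileCount_cross_eq_iff (hd : IsGPDof w d) :
    tileCount d .cross = invCount w ↔ NoDoubleCross d := by
  have hle : ∀ p ∈ Finset.univ.filter (fun p : Fin n × Fin n => p.1 < p.2),
      (if w p.2 < w p.1 then 1 else 0) ≤ crossCount d p.1 p.2 := fun p hp =>
    (hd.indicator_le_crossCount (by simpa using hp)).1
  rw [hd.1.tileCount_cross, invCount_eq_sum, eq_comm, Finset.sum_eq_sum_iff_of_le hle,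
    hd.1.noDoubleCross_iff]
  simp only [Finset.mem_filter_univ, Prod.forall]
  exact forall₃_congr fun p q hpq => (hd.indicator_le_crossCount hpq).2

end CrossingNumber

section ClassicShape

variable {w : Equiv.Perm (Fin n)} {d : Pipes n}

lemma IsValid.eq_none_iff_of_isStraight_imp_cross (hd : IsValid d) {i j : Fin n}
    (hcross : (tile d i j).IsStraight → tile d i j = .cross) :
    (Ea d i j = none ↔ So d i j = none) ∧ (No d i j = none ↔ We d i j = none) := by
  have hroute := hd.isRoutedBy_straightCells i j
  by_cases hs : (tile d i j).IsStraight
  · obtain ⟨-, hW, hS⟩ := (tile_eq_cross_iff d i j).mp (hcross hs)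
    simp_all [mem_straightCells]
  · simp_all [mem_straightCells]

lemma IsGPDof.west_eq_none_iff (hd : IsGPDof w d)
    (hcross : ∀ i j, (tile d i j).IsStraight → tile d i j = .cross) (i : Fin n) (j : Fin (n + 1)) :
    d.1 i j = none ↔ n ≤ i + j := by
  have hlocal (i j : Fin n) := hd.1.eq_none_iff_of_isStraight_imp_cross (hcross i j)
  induction j using Fin.induction generalizing i with
  | zero => simp [hd.2.1 i]
  | succ j ih =>
    have hE : d.1 i j.succ = none ↔ d.2 i.succ j = none := (hlocal i j).1
    rw [hE, Fin.val_succ]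
    rcases Nat.lt_or_ge (i + 1) n with hi | hi
    · have hN : d.2 i.succ j = none ↔ d.1 ⟨i + 1, hi⟩ j.castSucc = none :=
        (hlocal ⟨i + 1, hi⟩ j).2
      exact hN.trans ((ih _).trans (by rw [Fin.val_castSucc, add_right_comm, add_assoc]))
    · have hlast : i.succ = Fin.last n := Fin.ext (by grind)
      simp only [hlast, hd.2.2.2.1 j, true_iff]
      omega

lemma IsGPDof.tile_of_isStraight_imp_cross (hd : IsGPDof w d)
    (hcross : ∀ i j, (tile d i j).IsStraight → tile d i j = .cross) (i j : Fin n) :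
    ((i : ℕ) + j + 2 ≤ n → tile d i j = .cross ∨ tile d i j = .bump) ∧
      ((i : ℕ) + j + 2 = n + 1 → tile d i j = .nw) ∧
      ((i : ℕ) + j + 2 > n + 1 → tile d i j = .blank) := by
  have hW : We d i j = none ↔ n ≤ i + j := hd.west_eq_none_iff hcross i j.castSucc
  have hS : So d i j = none ↔ n ≤ i + (j + 1) :=
    (hd.1.eq_none_iff_of_isStraight_imp_cross (hcross i j)).1.symm.trans
      (hd.west_eq_none_iff hcross i j.succ)
  have htile := hcross i j
  unfold Tile.IsStraight at htile
  unfold tile at htile ⊢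
  rcases hW' : We d i j with _ | a <;> rcases hS' : So d i j with _ | b <;>
    simp only [hW', hS', true_iff, false_iff, reduceCtorEq] at hW hS htile ⊢ <;> grind

lemma IsClassic.isStraight_iff (hd : IsClassic d) (i j : Fin n) :
    (tile d i j).IsStraight ↔ tile d i j = .cross := by
  unfold Tile.IsStraight
  have := hd.1 i j
  have := hd.2.1 i j
  have := hd.2.2.1 i j
  grind

lemma IsClassic.straightTiles_eq (hd : IsClassic d) :
    straightTiles d = Finset.univ.filter fun p : Fin n × Fin n => tile d p.1 p.2 = .cross :=
  Finset.filter_congr fun p _ => hd.isStraight_iff p.1 p.2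

lemma IsClassic.add_lt_of_isStraight (hd : IsClassic d) {i j : Fin n}
    (h : (tile d i j).IsStraight) : (i : ℕ) + j + 1 < n := by
  rw [hd.isStraight_iff] at h
  have := hd.2.1 i j
  have := hd.2.2.1 i j
  grind

lemma filter_cross_subset_straightTiles (d : Pipes n) :
    (Finset.univ.filter fun p : Fin n × Fin n => tile d p.1 p.2 = .cross) ⊆ straightTiles d :=
  Finset.monotone_filter_right _ fun _ _ => Or.inl

lemma IsGPDof.invCount_le_card_straightTiles (hd : IsGPDof w d) :
    invCount w ≤ (straightTiles d).card :=
  hd.invCount_le_tileCount_cross.trans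
    (Finset.card_le_card (filter_cross_subset_straightTiles d))

theorem IsGPDof.isClassic_iff_card_straightTiles (hd : IsGPDof w d) :
    IsClassic d ↔ (straightTiles d).card = invCount w := by
  constructor
  · intro hc
    rw [hc.straightTiles_eq]
    exact hd.tileCount_cross_eq_iff.mpr hc.2.2.2
  · intro hcard
    have heq := Finset.eq_of_subset_of_card_le (filter_cross_subset_straightTiles d)
      (hcard.trans_le hd.invCount_le_tileCount_cross)
    have hcross (i j : Fin n) (h : (tile d i j).IsStraight) : tile d i j = .cross := by
      have hmem : (i, j) ∈ straightTiles d := mem_straightTiles.mpr h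
      rw [← heq] at hmem
      exact (Finset.mem_filter_univ (i, j)).mp hmem
    have hshape := hd.tile_of_isStraight_imp_cross hcross
    exact ⟨fun i j => (hshape i j).1, fun i j => (hshape i j).2.1, fun i j => (hshape i j).2.2,
      hd.tileCount_cross_eq_iff.mp ((congrArg Finset.card heq).trans hcard)⟩

end ClassicShape

section LeadingCoefficient

open Polynomial

/-- The weight `A + x_i - y_j` of a straight tile at position `(i, j)`. -/
noncomputable def straightWeight (p : Fin n × Fin n) : MvPolynomial (XYA n) ℤ :=
  MvPolynomial.X XYA.A + MvPolynomial.X (XYA.x p.1) - MvPolynomial.X (XYA.y p.2)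

/-- The weight of a tile `t` at position `p`, as a polynomial in `B`. -/
noncomputable def tileWeight (p : Fin n × Fin n) (t : Tile) : (MvPolynomial (XYA n) ℤ)[X] :=
  match t with
  | .cross | .horiz | .vert => C (straightWeight p)
  | .blank => X - C (MvPolynomial.X (XYA.x p.1) - MvPolynomial.X (XYA.y p.2))
  | _ => X + C (MvPolynomial.X XYA.A)

lemma wtB_eq_prod_tileWeight (d : Pipes n) : wtB d = ∏ p, tileWeight p (tile d p.1 p.2) := by
  rw [Fintype.prod_prod_type]
  refine Fintype.prod_congr _ _ fun i => Fintype.prod_congr _ _ fun j => ?_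
  cases tile d i j <;> rfl

lemma Tile.IsStraight.tileWeight_eq {t : Tile} (ht : t.IsStraight) (p : Fin n × Fin n) :
    tileWeight p t = C (straightWeight p) := by
  rcases ht with rfl | rfl | rfl <;> rfl

lemma monic_tileWeight {t : Tile} (ht : ¬ t.IsStraight) (p : Fin n × Fin n) :
    (tileWeight p t).Monic ∧ (tileWeight p t).natDegree = 1 := by
  cases t with
  | cross | horiz | vert => simp [Tile.IsStraight] at ht
  | blank => exact ⟨monic_X_sub_C _, natDegree_X_sub_C _⟩
  | bump | nw | se => exact ⟨monic_X_add_C _, natDegree_X_add_C _⟩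

lemma exists_wtB_eq_C_mul_monic (d : Pipes n) : ∃ M : (MvPolynomial (XYA n) ℤ)[X],
    M.Monic ∧ M.natDegree = n ^ 2 - (straightTiles d).card ∧
      wtB d = C (∏ p ∈ straightTiles d, straightWeight p) * M := by
  have hM (p) (hp : p ∈ (straightTiles d)ᶜ) := monic_tileWeight (t := tile d p.1 p.2)
    (by simpa [mem_straightTiles] using hp) p
  refine ⟨∏ p ∈ (straightTiles d)ᶜ, tileWeight p (tile d p.1 p.2),
    monic_prod_of_monic _ _ fun p hp => (hM p hp).1, ?_, ?_⟩
  · rw [natDegree_prod_of_monic _ _ fun p hp => (hM p hp).1,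
      Finset.sum_congr rfl fun p hp => (hM p hp).2]
    simp [Finset.card_compl, sq]
  · rw [wtB_eq_prod_tileWeight, ← Finset.prod_mul_prod_compl (straightTiles d), map_prod]
    congr 1
    exact Finset.prod_congr rfl fun p hp =>
      Tile.IsStraight.tileWeight_eq (by simpa [mem_straightTiles] using hp) p

variable {w : Equiv.Perm (Fin n)} {d : Pipes n}

lemma IsGPDof.coeff_wtB (hd : IsGPDof w d) : (wtB d).coeff (n ^ 2 - invCount w) =
    if IsClassic d then ∏ p ∈ straightTiles d, straightWeight p else 0 := by
  obtain ⟨M, hmonic, hdeg, hwt⟩ := exists_wtB_eq_C_mul_monic d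
  rw [hwt, coeff_C_mul]
  have hle := hd.invCount_le_card_straightTiles
  have hclassic := hd.isClassic_iff_card_straightTiles
  split_ifs with hc
  · rw [← hclassic.mp hc, ← hdeg, hmonic.coeff_natDegree, mul_one]
  · have hcard : (straightTiles d).card ≤ n ^ 2 := by
      simpa [sq] using Finset.card_le_univ (straightTiles d)
    have hlt : (straightTiles d).card ≠ invCount w := fun h => hc (hclassic.mpr h)
    rw [coeff_eq_zero_of_natDegree_lt (by omega), mul_zero]

theorem coeff_GB (w : Equiv.Perm (Fin n)) : (GB w).coeff (n ^ 2 - invCount w) =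
    ∑ d ∈ Finset.univ.filter (fun d : Pipes n => IsGPDof w d ∧ IsClassic d),
      ∏ p ∈ Finset.univ.filter (fun p : Fin n × Fin n => tile d p.1 p.2 = .cross),
        straightWeight p := by
  rw [GB, finsetSum_coeff, ← Finset.filter_filter, Finset.sum_filter IsClassic]
  refine Finset.sum_congr rfl fun d hd => ?_
  rw [IsGPDof.coeff_wtB (by simpa using hd)]
  split_ifs with hc
  · rw [hc.straightTiles_eq]
  · rfl

end LeadingCoefficient

section Staircase

/-- The extension of a permutation of `Fin n` to `ℕ` which fixes the numbers from `n` on. -/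
noncomputable def natExtend (w : Equiv.Perm (Fin n)) : Equiv.Perm ℕ :=
  w.viaEmbedding Fin.valEmbedding

lemma natExtend_val (w : Equiv.Perm (Fin n)) (i : Fin n) : natExtend w i = w i :=
  w.viaEmbedding_apply Fin.valEmbedding i

lemma natExtend_of_le (w : Equiv.Perm (Fin n)) {a : ℕ} (ha : n ≤ a) : natExtend w a = a :=
  w.viaEmbedding_apply_of_notMem Fin.valEmbedding a (by simpa using ha)

lemma natExtend_eq_iff {w : Equiv.Perm (Fin n)} {v : Equiv.Perm ℕ} (hv : ∀ a, n ≤ a → v a = a) :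
    natExtend w = v ↔ ∀ i : Fin n, (w i : ℕ) = v i := by
  refine ⟨fun h i => by rw [← h, natExtend_val], fun h => Equiv.ext fun a => ?_⟩
  rcases lt_or_ge a n with ha | ha
  · exact (natExtend_val w ⟨a, ha⟩).trans (h ⟨a, ha⟩)
  · rw [natExtend_of_le w ha, hv a ha]

lemma natInvCount_natExtend (w : Equiv.Perm (Fin n)) :
    natInvCount n (natExtend w) = invCount w := by
  simp only [natInvCount, natExtend_val, Fin.val_fin_lt, invCount]

/-- The cells strictly above the antidiagonal of the `n × n` grid, in sweeping order. -/
def staircase (n : ℕ) : List (ℕ × ℕ) := sweepCells (fun a => n - 1 - a) 0 n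

lemma mem_staircase {c : ℕ × ℕ} : c ∈ staircase n ↔ c.1 + c.2 + 1 < n := by
  rw [staircase, mem_sweepCells]
  omega

lemma nodup_staircase (n : ℕ) : (staircase n).Nodup := nodup_sweepCells _ _ _

variable {D : Finset (ℕ × ℕ)}

lemma subwordProd_apply_of_le (hD : D ⊆ (staircase n).toFinset) (l : List (ℕ × ℕ)) {a : ℕ}
    (ha : n ≤ a) : subwordProd D l a = a := by
  induction l with
  | nil => rfl
  | cons c l ih =>
    rw [subwordProd_cons, Equiv.Perm.mul_apply, ih]
    split_ifs with hc
    · have := mem_staircase.mp (List.mem_toFinset.mp (hD hc))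
      exact natSwap_apply_of_ne (by omega) (by omega)
    · rfl

lemma cellState_apply_of_le (hD : D ⊆ (staircase n).toFinset) {i j a : ℕ} (ha : n ≤ a) :
    cellState D n i j a = a := by
  rw [cellState, Equiv.Perm.mul_apply, subwordProd_apply_of_le hD _ ha, rowState,
    subwordProd_apply_of_le hD _ ha]

lemma rowState_zero_eq_subwordProd_staircase (hD : D ⊆ (staircase n).toFinset) :
    rowState D n 0 = subwordProd D (staircase n) := by
  refine subwordProd_sweepCells_of_le (fun a => by omega) (fun c hc => ?_) 0 n
  have := mem_staircase.mp (List.mem_toFinset.mp (hD hc))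
  omega

lemma toLabel_cellState_of_lt (hD : D ⊆ (staircase n).toFinset) {i j a : ℕ} (ha : a < n) :
    toLabel n (cellState D n i j a) ≠ none := by
  rw [Ne, toLabel_eq_none_iff]
  intro h
  have hfix := (cellState D n i j).injective (cellState_apply_of_le hD h)
  omega

lemma straightCells_pipesOf (hD : D ⊆ (staircase n).toFinset) :
    straightCells (pipesOf n D) = D := by
  have hiff (i j : Fin n) : (tile (pipesOf n D) i j).IsStraight ↔ ((i : ℕ), (j : ℕ)) ∈ D := by
    have hroute := isRoutedBy_pipesOf D i j
    rw [(isValid_pipesOf D).isStraight_iff]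
    split_ifs at hroute with hij <;> rw [Prod.mk.injEq] at hroute
    · refine iff_of_true ⟨hroute.1, fun h => ?_⟩ hij
      have hlt := mem_staircase.mp (List.mem_toFinset.mp (hD hij))
      have hlt' : (i : ℕ) + j < n := by omega
      exact toLabel_cellState_of_lt hD hlt' (((isValid_pipesOf D) i j).2 h)
    · exact iff_of_false (fun h => h.2 (h.1.symm.trans hroute.1)) hij
  ext ⟨a, b⟩
  constructor
  · intro h
    obtain ⟨⟨i, j⟩, hij, heq⟩ := Finset.mem_map.mp h
    rw [← heq]
    exact (hiff i j).mp (mem_straightTiles.mp hij)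
  · intro h
    have hlt := mem_staircase.mp (List.mem_toFinset.mp (hD h))
    exact mem_straightCells (i := ⟨a, by omega⟩) (j := ⟨b, by omega⟩) |>.mpr ((hiff _ _).mpr h)

variable {w : Equiv.Perm (Fin n)}

lemma isGPDof_pipesOf_iff (hD : D ⊆ (staircase n).toFinset) :
    IsGPDof w (pipesOf n D) ↔ (subwordProd D (staircase n))⁻¹ = natExtend w := by
  have heast (i : Fin n) : (pipesOf n D).1 i (Fin.last n) = none := by
    change toLabel n (cellState D n i n (i + n)) = none
    rw [cellState_apply_of_le hD (Nat.le_add_left _ _), toLabel_eq_none_iff]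
    exact Nat.le_add_left _ _
  have hfix (a : ℕ) (ha : n ≤ a) : (subwordProd D (staircase n))⁻¹ a = a := by
    rw [Equiv.Perm.inv_eq_iff_eq, subwordProd_apply_of_le hD _ ha]
  rw [eq_comm, natExtend_eq_iff hfix]
  simp only [IsGPDof, isValid_pipesOf, west_pipesOf, south_pipesOf, heast, north_pipesOf,
    toLabel_eq_some_iff, implies_true, true_and, rowState_zero_eq_subwordProd_staircase hD,
    Equiv.Perm.eq_inv_iff_eq]
  exact ⟨fun h i => by rw [h, Equiv.symm_apply_apply],
    fun h j => by rw [← h (w.symm j), Equiv.apply_symm_apply]⟩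

lemma card_straightCells (d : Pipes n) : (straightCells d).card = (straightTiles d).card :=
  Finset.card_map _

lemma isReducedSubword_staircase_iff (hD : D ⊆ (staircase n).toFinset) :
    IsReducedSubword n (staircase n) (natExtend w) D ↔
      IsGPDof w (pipesOf n D) ∧ IsClassic (pipesOf n D) := by
  rw [IsReducedSubword, ← isGPDof_pipesOf_iff hD]
  refine and_congr_right fun hgpd => ?_
  rw [hgpd.isClassic_iff_card_straightTiles, ← card_straightCells, straightCells_pipesOf hD,
    natInvCount_natExtend]

lemma IsClassic.straightCells_subset {d : Pipes n} (hd : IsClassic d) :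
    straightCells d ⊆ (staircase n).toFinset := by
  intro c hc
  obtain ⟨⟨i, j⟩, hij, rfl⟩ := Finset.mem_map.mp hc
  exact List.mem_toFinset.mpr
    (mem_staircase.mpr (hd.add_lt_of_isStraight (mem_straightTiles.mp hij)))

theorem sum_isClassic_eq_cellProd {R : Type*} [CommRing R] (t : ℕ × ℕ → R)
    (w : Equiv.Perm (Fin n)) :
    ∑ d ∈ Finset.univ.filter (fun d : Pipes n => IsGPDof w d ∧ IsClassic d),
      ∏ p ∈ Finset.univ.filter (fun p : Fin n × Fin n => tile d p.1 p.2 = .cross), t (p.1, p.2) =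
    cellProd descentOp t (staircase n) (Pi.single 1 1) (natExtend w) := by
  rw [cellProd_descentOp_apply t (nodup_staircase n) fun c => mem_staircase.mp]
  refine Finset.sum_nbij' straightCells (pipesOf n) (fun d hd => ?_) (fun D hD => ?_)
    (fun d hd => ?_) (fun D hD => ?_) fun d hd => ?_
  all_goals simp only [Finset.mem_filter, Finset.mem_univ, Finset.mem_powerset, true_and] at *
  · have hsub := hd.2.straightCells_subset
    rw [isReducedSubword_staircase_iff hsub, ← hd.1.eq_pipesOf]
    exact ⟨hsub, hd⟩
  · exact (isReducedSubword_staircase_iff hD.1).mp hD.2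
  · exact hd.1.eq_pipesOf.symm
  · exact straightCells_pipesOf hD.1
  · rw [straightCells, Finset.prod_map, hd.2.straightTiles_eq]
    rfl

end Staircase

section LongestElement

variable {D : Finset (ℕ × ℕ)}

lemma subwordProd_rowCells_apply_of_forall_mem {i m : ℕ} (hD : ∀ j < m, (i, j) ∈ D) (a : ℕ) :
    subwordProd D (rowCells i m) a =
      if i ≤ a ∧ a < i + m then a + 1 else if a = i + m then i else a := by
  induction m generalizing a with
  | zero =>
    change a = _
    grind
  | succ m ih =>
    rw [subwordProd_rowCells_succ, if_pos (hD m m.lt_succ_self), Equiv.Perm.mul_apply,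
      ih fun j hj => hD j (hj.trans m.lt_succ_self), natSwap_apply]
    grind

lemma subwordProd_sweepCells_apply_of_forall_mem {i m : ℕ} (him : i + m = n)
    (hD : ∀ c : ℕ × ℕ, c.1 + c.2 + 1 < n → c ∈ D) (a : ℕ) :
    subwordProd D (sweepCells (fun a => n - 1 - a) i m) a =
      if i ≤ a ∧ a < n then i + n - 1 - a else a := by
  induction m generalizing i a with
  | zero =>
    change a = _
    grind
  | succ m ih =>
    rw [sweepCells, subwordProd_append, Equiv.Perm.mul_apply,
      subwordProd_rowCells_apply_of_forall_mem fun j hj => hD _ (by grind), ih (by omega)]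
    grind

lemma subwordProd_staircase_self (n : ℕ) :
    (subwordProd (staircase n).toFinset (staircase n))⁻¹ =
      natExtend (Fin.revPerm : Equiv.Perm (Fin n)) := by
  have hfix (a : ℕ) (ha : n ≤ a) :
      (subwordProd (staircase n).toFinset (staircase n))⁻¹ a = a := by
    rw [Equiv.Perm.inv_eq_iff_eq, subwordProd_apply_of_le subset_rfl _ ha]
  rw [eq_comm, natExtend_eq_iff hfix]
  intro i
  rw [Equiv.Perm.eq_inv_iff_eq]
  refine (subwordProd_sweepCells_apply_of_forall_mem (zero_add n)
    (fun c hc => List.mem_toFinset.mpr (mem_staircase.mpr hc)) _).trans ?_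
  simp only [Fin.revPerm_apply, Fin.val_rev]
  grind

lemma staircase_toFinset_eq_map (n : ℕ) : (staircase n).toFinset =
    (Finset.univ.filter fun p : Fin n × Fin n => (p.1 : ℕ) + p.2 + 2 ≤ n).map
      (Fin.valEmbedding.prodMap Fin.valEmbedding) := by
  ext ⟨a, b⟩
  simp only [List.mem_toFinset, mem_staircase, Finset.mem_map, Finset.mem_filter_univ, Prod.exists]
  constructor
  · exact fun h => ⟨⟨a, by omega⟩, ⟨b, by omega⟩, by grind, rfl⟩
  · rintro ⟨i, j, hij, heq⟩
    obtain ⟨rfl, rfl⟩ := Prod.mk.inj heq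
    exact hij

lemma card_staircase (n : ℕ) :
    (staircase n).toFinset.card = invCount (Fin.revPerm : Equiv.Perm (Fin n)) := by
  rw [staircase_toFinset_eq_map, Finset.card_map]
  refine Finset.card_equiv ((Equiv.refl _).prodCongr Fin.revPerm) fun ⟨i, j⟩ => ?_
  simp only [Finset.mem_filter_univ, Equiv.prodCongr_apply, Prod.map_apply, Equiv.refl_apply,
    Fin.revPerm_apply, Fin.lt_def, Fin.val_rev]
  omega

end LongestElement

section Schubert

/-- The generating function of the reduced subwords of the staircase word for the permutation `v`,
in which a cross at the cell `(i, j)` has weight `x i - y j`. -/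
noncomputable def pipeDreamSum {R : Type*} [CommRing R] (n : ℕ) (x y : ℕ → R)
    (v : Equiv.Perm ℕ) : R :=
  cellProd descentOp (fun c => x c.1 - y c.2) (staircase n) (Pi.single 1 1) v

section pipeDreamSum

variable {R S : Type*} [CommRing R] [CommRing S] (x y : ℕ → R) (v : Equiv.Perm ℕ)

lemma pipeDreamSum_eq_sum : pipeDreamSum n x y v =
    ∑ D ∈ (staircase n).toFinset.powerset with IsReducedSubword n (staircase n) v D,
      ∏ c ∈ D, (x c.1 - y c.2) :=
  cellProd_descentOp_apply _ (nodup_staircase n) (fun _ => mem_staircase.mp) v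

lemma map_pipeDreamSum (f : R →+* S) :
    f (pipeDreamSum n x y v) = pipeDreamSum n (f ∘ x) (f ∘ y) v := by
  simp only [pipeDreamSum_eq_sum, map_sum, map_prod, map_sub, Function.comp_apply]

theorem pipeDreamSum_mul_natSwap {k : ℕ} (hk : k + 1 < n) (hv : v (k + 1) < v k) :
    (x k - x (k + 1)) * pipeDreamSum n x y (v * natSwap k) =
      pipeDreamSum n x y v - pipeDreamSum n (x ∘ natSwap k) y v := by
  have hswap := (isNilCoxeter_descentOp (R := R)).cellProd_sweepCells_natSwap (i := 0) (m := n)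
    (k := k) (width := fun a => n - 1 - a) x y (by omega) k.zero_le (by omega)
  have happly := congrFun (LinearMap.congr_fun hswap (Pi.single 1 1)) v
  simp only [Module.End.mul_apply, ybFactor, LinearMap.add_apply, Module.End.one_apply,
    LinearMap.smul_apply, Pi.add_apply, Pi.smul_apply, smul_eq_mul, descentOp_apply, if_pos hv]
    at happly
  simp only [pipeDreamSum, staircase, Function.comp_apply]
  linear_combination happly

lemma pipeDreamSum_natExtend_revPerm :
    pipeDreamSum n x y (natExtend (Fin.revPerm : Equiv.Perm (Fin n))) =
      ∏ p ∈ Finset.univ.filter (fun p : Fin n × Fin n => (p.1 : ℕ) + (p.2 : ℕ) + 2 ≤ n),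
        (x p.1 - y p.2) := by
  rw [pipeDreamSum_eq_sum, Finset.sum_eq_single (staircase n).toFinset, staircase_toFinset_eq_map,
    Finset.prod_map]
  · rfl
  · intro D hD hne
    obtain ⟨hsub, -, hcard⟩ := Finset.mem_filter.mp hD
    rw [natInvCount_natExtend, ← card_staircase] at hcard
    exact absurd (Finset.eq_of_subset_of_card_le (Finset.mem_powerset.mp hsub) hcard.ge) hne
  · refine fun h => absurd (Finset.mem_filter.mpr ⟨Finset.mem_powerset_self _, ?_⟩) h
    exact ⟨subwordProd_staircase_self n, by rw [natInvCount_natExtend, card_staircase]⟩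

end pipeDreamSum

lemma natExtend_mul_adjSwap (w : Equiv.Perm (Fin n)) (i : Fin n) (hi : (i : ℕ) + 1 < n) :
    natExtend (w * adjSwap i hi) = natExtend w * natSwap i := by
  refine (natExtend_eq_iff fun a ha => ?_).mpr fun j => ?_
  · rw [Equiv.Perm.mul_apply, natSwap_apply_of_ne (by omega) (by omega), natExtend_of_le w ha]
  · rw [Equiv.Perm.mul_apply, Equiv.Perm.mul_apply, ← coe_adjSwap i hi, natExtend_val]

lemma natExtend_descent {w : Equiv.Perm (Fin n)} {i : Fin n} {hi : (i : ℕ) + 1 < n}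
    (h : w ⟨(i : ℕ) + 1, hi⟩ < w i) : natExtend w (i + 1) < natExtend w i := by
  rw [natExtend_val]
  exact (natExtend_val w ⟨i + 1, hi⟩).trans_lt h

lemma invCount_mul_adjSwap_of_descent {w : Equiv.Perm (Fin n)} {i : Fin n} {hi : (i : ℕ) + 1 < n}
    (h : w ⟨(i : ℕ) + 1, hi⟩ < w i) : invCount (w * adjSwap i hi) + 1 = invCount w := by
  rw [← natInvCount_natExtend, ← natInvCount_natExtend, natExtend_mul_adjSwap,
    natInvCount_mul_natSwap_of_descent hi (natExtend_descent h)]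

lemma mul_adjSwap_mul_adjSwap (w : Equiv.Perm (Fin n)) (i : Fin n) (hi : (i : ℕ) + 1 < n) :
    w * adjSwap i hi * adjSwap i hi = w := by
  rw [mul_assoc, adjSwap, Equiv.swap_mul_self, mul_one]

lemma invCount_mul_adjSwap_of_ascent {w : Equiv.Perm (Fin n)} {i : Fin n} {hi : (i : ℕ) + 1 < n}
    (h : w i < w ⟨(i : ℕ) + 1, hi⟩) : invCount (w * adjSwap i hi) = invCount w + 1 := by
  have hdesc : (w * adjSwap i hi) ⟨(i : ℕ) + 1, hi⟩ < (w * adjSwap i hi) i := by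
    rwa [Equiv.Perm.mul_apply, Equiv.Perm.mul_apply, adjSwap, Equiv.swap_apply_left,
      Equiv.swap_apply_right]
  rw [← invCount_mul_adjSwap_of_descent hdesc, mul_adjSwap_mul_adjSwap]

lemma descent_of_invCount_lt {w : Equiv.Perm (Fin n)} {i : Fin n} {hi : (i : ℕ) + 1 < n}
    (h : invCount (w * adjSwap i hi) < invCount w) : w ⟨(i : ℕ) + 1, hi⟩ < w i := by
  by_contra hle
  have hne : w i ≠ w ⟨(i : ℕ) + 1, hi⟩ := w.injective.ne (by simp [Fin.ext_iff])
  have := invCount_mul_adjSwap_of_ascent (lt_of_le_of_ne (not_lt.mp hle) hne)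
  omega

lemma exists_ascent {w : Equiv.Perm (Fin n)} (hw : w ≠ Fin.revPerm) :
    ∃ (i : Fin n) (hi : (i : ℕ) + 1 < n), w i < w ⟨(i : ℕ) + 1, hi⟩ := by
  by_contra! hdesc
  have hanti : StrictAnti w := by
    cases n with
    | zero => exact fun i => i.elim0
    | succ m =>
      refine Fin.strictAnti_iff_succ_lt.mpr fun i => (hdesc i.castSucc (by simp)).lt_of_ne ?_
      exact w.injective.ne i.castSucc_lt_succ.ne'
  have hrev : w ∘ Fin.rev = id :=
    (StrictMono.range_inj (hanti.comp Fin.rev_strictAnti) strictMono_id).mp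
      (by rw [Set.range_id, (w.surjective.comp Fin.rev_surjective).range_eq])
  refine hw (Equiv.ext fun i => ?_)
  simpa using congrFun hrev i.rev

/-- The action of the adjacent transposition `sᵢ` on the variables of double Schubert
polynomials. -/
def swapX (i : Fin n) (hi : (i : ℕ) + 1 < n) (z : XY n) : XY n :=
  z.casesOn (fun k => .x (adjSwap i hi k)) .y

open MvPolynomial in
/-- The family `S` satisfies the recursive definition of double Schubert polynomials; the divided
differences are cleared of their denominators. -/
structure IsDoubleSchubert (S : Equiv.Perm (Fin n) → MvPolynomial (XY n) ℤ) : Prop where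
  revPerm : S Fin.revPerm =
    ∏ p ∈ Finset.univ.filter (fun p : Fin n × Fin n => (p.1 : ℕ) + (p.2 : ℕ) + 2 ≤ n),
      (X (XY.x p.1) - X (XY.y p.2))
  mul_adjSwap (v : Equiv.Perm (Fin n)) (i : Fin n) (hi : (i : ℕ) + 1 < n) :
    invCount (v * adjSwap i hi) < invCount v →
      (X (XY.x i) - X (XY.x ⟨(i : ℕ) + 1, hi⟩)) * S (v * adjSwap i hi) =
        S v - rename (swapX i hi) (S v)

theorem IsDoubleSchubert.unique {S T : Equiv.Perm (Fin n) → MvPolynomial (XY n) ℤ}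
    (hS : IsDoubleSchubert S) (hT : IsDoubleSchubert T) : S = T := by
  funext w
  induction hN : n * n - invCount w using Nat.strong_induction_on generalizing w with
  | _ N ih =>
    by_cases hw : w = Fin.revPerm
    · rw [hw, hS.revPerm, hT.revPerm]
    · obtain ⟨i, hi, hasc⟩ := exists_ascent hw
      have hlen := invCount_mul_adjSwap_of_ascent hasc
      have hbound : invCount (w * adjSwap i hi) ≤ n * n := by
        refine (Finset.card_le_univ _).trans_eq ?_
        rw [Fintype.card_prod, Fintype.card_fin]
      have hlt : invCount (w * adjSwap i hi * adjSwap i hi) < invCount (w * adjSwap i hi) := by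
        rw [mul_adjSwap_mul_adjSwap]
        omega
      have hSw := hS.mul_adjSwap _ i hi hlt
      rw [ih _ (by omega) (w * adjSwap i hi) rfl, ← hT.mul_adjSwap _ i hi hlt,
        mul_adjSwap_mul_adjSwap] at hSw
      refine mul_left_cancel₀ (sub_ne_zero.mpr fun h => ?_) hSw
      simpa [Fin.ext_iff] using MvPolynomial.X_injective h

/-- The variables `xᵢ`, extended by zero to all indices. -/
noncomputable def xVar (n : ℕ) : ℕ → MvPolynomial (XY n) ℤ :=
  Function.extend Fin.val (fun i => MvPolynomial.X (XY.x i)) 0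

/-- The variables `yⱼ`, extended by zero to all indices. -/
noncomputable def yVar (n : ℕ) : ℕ → MvPolynomial (XY n) ℤ :=
  Function.extend Fin.val (fun j => MvPolynomial.X (XY.y j)) 0

lemma xVar_val (i : Fin n) : xVar n i = MvPolynomial.X (XY.x i) :=
  Fin.val_injective.extend_apply _ _ i

lemma yVar_val (j : Fin n) : yVar n j = MvPolynomial.X (XY.y j) :=
  Fin.val_injective.extend_apply _ _ j

lemma rename_swapX_comp_xVar (i : Fin n) (hi : (i : ℕ) + 1 < n) :
    MvPolynomial.rename (swapX i hi) ∘ xVar n = xVar n ∘ natSwap i := by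
  funext a
  rw [Function.comp_apply, Function.comp_apply]
  by_cases ha : a < n
  · lift a to Fin n using ha
    rw [xVar_val, MvPolynomial.rename_X, ← coe_adjSwap i hi, xVar_val, swapX]
  · rw [natSwap_apply_of_ne (by omega) (by omega), xVar,
      Function.extend_apply' _ _ _ fun ⟨b, hb⟩ => ha (hb ▸ b.2), Pi.zero_apply, map_zero]

lemma rename_swapX_comp_yVar (i : Fin n) (hi : (i : ℕ) + 1 < n) :
    MvPolynomial.rename (swapX i hi) ∘ yVar n = yVar n := by
  funext a
  rw [Function.comp_apply]
  by_cases ha : a < n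
  · lift a to Fin n using ha
    rw [yVar_val, MvPolynomial.rename_X, swapX]
  · rw [yVar, Function.extend_apply' _ _ _ fun ⟨b, hb⟩ => ha (hb ▸ b.2), Pi.zero_apply, map_zero]

theorem isDoubleSchubert_pipeDreamSum :
    IsDoubleSchubert fun w : Equiv.Perm (Fin n) =>
      pipeDreamSum n (xVar n) (yVar n) (natExtend w) where
  revPerm := by simp only [pipeDreamSum_natExtend_revPerm, xVar_val, yVar_val]
  mul_adjSwap v i hi h := by
    have hdiff := pipeDreamSum_mul_natSwap (xVar n) (yVar n) (natExtend v) hi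
      (natExtend_descent (descent_of_invCount_lt h))
    have hmap := map_pipeDreamSum (n := n) (xVar n) (yVar n) (natExtend v)
      (MvPolynomial.rename (R := ℤ) (swapX i hi)).toRingHom
    rw [AlgHom.toRingHom_eq_coe, AlgHom.coe_toRingHom, rename_swapX_comp_xVar,
      rename_swapX_comp_yVar] at hmap
    rw [hmap, natExtend_mul_adjSwap, ← hdiff, xVar_val, ← xVar_val ⟨i + 1, hi⟩]

theorem IsDoubleSchubert.eq_sum_isClassic {S : Equiv.Perm (Fin n) → MvPolynomial (XY n) ℤ}
    (hS : IsDoubleSchubert S) (w : Equiv.Perm (Fin n)) : S w =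
      ∑ d ∈ Finset.univ.filter (fun d : Pipes n => IsGPDof w d ∧ IsClassic d),
        ∏ p ∈ Finset.univ.filter (fun p : Fin n × Fin n => tile d p.1 p.2 = .cross),
          (MvPolynomial.X (XY.x p.1) - MvPolynomial.X (XY.y p.2)) := by
  rw [hS.unique isDoubleSchubert_pipeDreamSum]
  simp only [pipeDreamSum, ← sum_isClassic_eq_cellProd, xVar_val, yVar_val]

end Schubert

theorem statement1 {n : ℕ} (hn : 1 ≤ n)
    (S : Equiv.Perm (Fin n) → MvPolynomial (XY n) ℤ)
    -- the base case of the definition of double Schubert polynomials: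
    -- `S_{w₀} = ∏_{i + j ≤ n} (xᵢ - yⱼ)` (1-indexed)
    (hbase : S Fin.revPerm =
      ∏ p ∈ Finset.univ.filter (fun p : Fin n × Fin n => (p.1 : ℕ) + (p.2 : ℕ) + 2 ≤ n),
        (MvPolynomial.X (XY.x p.1) - MvPolynomial.X (XY.y p.2)))
    -- the divided difference recursion: if `ℓ(v sᵢ) < ℓ(v)` then
    -- `(xᵢ - xᵢ₊₁) · S_{v sᵢ} = S_v - sᵢ · S_v`
    (hrec : ∀ (v : Equiv.Perm (Fin n)) (i : Fin n) (hi : (i : ℕ) + 1 < n),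
      invCount (v * adjSwap i hi) < invCount v →
      (MvPolynomial.X (XY.x i) - MvPolynomial.X (XY.x ⟨(i : ℕ) + 1, hi⟩)) *
          S (v * adjSwap i hi) =
        S v - MvPolynomial.rename (fun z : XY n => match z with
          | XY.x k => XY.x (adjSwap i hi k)
          | XY.y k => XY.y k) (S v))
    (w : Equiv.Perm (Fin n)) :
    (GB w).coeff (n ^ 2 - invCount w) =
      (∑ d ∈ Finset.univ.filter (fun d : Pipes n => IsGPDof w d ∧ IsClassic d),
        ∏ p ∈ Finset.univ.filter (fun p : Fin n × Fin n => tile d p.1 p.2 = .cross),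
          (MvPolynomial.X XYA.A + MvPolynomial.X (XYA.x p.1) - MvPolynomial.X (XYA.y p.2))) ∧
    (∑ d ∈ Finset.univ.filter (fun d : Pipes n => IsGPDof w d ∧ IsClassic d),
        ∏ p ∈ Finset.univ.filter (fun p : Fin n × Fin n => tile d p.1 p.2 = .cross),
          (MvPolynomial.X XYA.A + MvPolynomial.X (XYA.x p.1) - MvPolynomial.X (XYA.y p.2))) =
      MvPolynomial.aeval (R := ℤ) (S₁ := MvPolynomial (XYA n) ℤ)
        (fun z : XY n => match z with
          | XY.x i => MvPolynomial.X XYA.A + MvPolynomial.X (XYA.x i)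
          | XY.y j => MvPolynomial.X (XYA.y j)) (S w) := by
  have hS : IsDoubleSchubert S := by
    refine ⟨hbase, fun v i hi h => (hrec v i hi h).trans ?_⟩
    congr 3
    ext (_ | _) <;> rfl
  refine ⟨coeff_GB w, ?_⟩
  simp only [hS.eq_sum_isClassic, map_sum, map_prod, map_sub, MvPolynomial.aeval_X]

end GPDpaper
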